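/- Let n ≥ 2 and let h : Sⁿ → A be a social choice function on the domain of single-peaked preferences. If h is efficient and strategy-proof, then h is tops-only: for any two profiles R, R' ∈ Sⁿ with τ(R_i) = τ(R'_i) for every agent i, h(R) = h(R'). -/

import Mathlib

/-- The set of alternatives: the closed interval [0,1]. -/
abbrev A : Type := Set.Icc (0:ℝ) 1

def zeroA : A := ⟨0, by constructor <;> norm_num⟩
def oneA : A := ⟨1, by constructor <;> norm_num⟩

/-- A preference: a complete (total) and transitive binary relation on A. -/
structure Pref : Type where
  rel : A → A → Prop
  total : ∀ a b : A, rel a b ∨ rel b a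
  trans : ∀ a b c : A, rel a b → rel b c → rel a c

/-- Strict part of a preference. -/
def Pref.P (R : Pref) (a b : A) : Prop := R.rel a b ∧ ¬ R.rel b a

/-- `p` is a peak of `R`: `R` is single-peaked with peak `p`. -/
def Pref.IsPeak (R : Pref) (p : A) : Prop :=
  ∀ a b : A, ((p ≤ a ∧ a < b) ∨ (b < a ∧ a ≤ p)) → R.P a b

/-- Single-peaked preferences. -/
def SinglePeaked (R : Pref) : Prop := ∃ p : A, R.IsPeak p

/-- The completely indifferent preference R⁰. -/
def R0 : Pref :=
  ⟨fun _ _ => True, fun _ _ => Or.inl trivial, fun _ _ _ _ _ => trivial⟩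

/-- The augmented domain S₀ = S ∪ {R⁰}. -/
def S0 : Type := {R : Pref // SinglePeaked R ∨ R = R0}

/-- The completely indifferent profile R^{0N}. -/
def indiffProfile (n : ℕ) : Fin n → S0 := fun _ => ⟨R0, Or.inr rfl⟩

open Classical in
/-- The peak of a single-peaked preference (junk value `zeroA` otherwise). -/
noncomputable def peak (R : Pref) : A :=
  if h : SinglePeaked R then h.choose else zeroA

/-- τ̲(R): the smallest peak among non-indifferent agents (as a real number). -/
noncomputable def tmin {n : ℕ} (R : Fin n → S0) : ℝ :=
  sInf {x : ℝ | ∃ i : Fin n, (R i).1 ≠ R0 ∧ ((peak (R i).1 : ℝ) = x)}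

/-- τ̄(R): the largest peak among non-indifferent agents (as a real number). -/
noncomputable def tmax {n : ℕ} (R : Fin n → S0) : ℝ :=
  sSup {x : ℝ | ∃ i : Fin n, (R i).1 ≠ R0 ∧ ((peak (R i).1 : ℝ) = x)}

/-- Onto-ness. -/
def Onto {n : ℕ} (f : (Fin n → S0) → A) : Prop := ∀ a : A, ∃ R : Fin n → S0, f R = a

/-- (Individual) strategy-proofness. -/
def StrategyProof {n : ℕ} (f : (Fin n → S0) → A) : Prop :=
  ∀ (R : Fin n → S0) (i : Fin n) (Ri' : S0),
    (R i).1.rel (f R) (f (Function.update R i Ri'))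

/-- No profitable deviation by the coalition `S`. -/
def CoalitionSP {n : ℕ} (f : (Fin n → S0) → A) (S : Finset (Fin n)) : Prop :=
  ¬ ∃ R R' : Fin n → S0,
      (∀ i ∉ S, R' i = R i) ∧
      (∀ i ∈ S, (R i).1.rel (f R') (f R)) ∧
      (∃ j ∈ S, (R j).1.P (f R') (f R))

/-- Group strategy-proofness. -/
def GroupSP {n : ℕ} (f : (Fin n → S0) → A) : Prop :=
  ∀ S : Finset (Fin n), S.Nonempty → CoalitionSP f S

/-- Pairwise strategy-proofness. -/
def PairwiseSP {n : ℕ} (f : (Fin n → S0) → A) : Prop :=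
  ∀ S : Finset (Fin n), S.Nonempty → S.card ≤ 2 → CoalitionSP f S

/-- No deviation making every member of `S` strictly better off. -/
def WeakCoalitionSP {n : ℕ} (f : (Fin n → S0) → A) (S : Finset (Fin n)) : Prop :=
  ¬ ∃ R R' : Fin n → S0,
      (∀ i ∉ S, R' i = R i) ∧
      (∀ i ∈ S, (R i).1.P (f R') (f R))

/-- Weak group strategy-proofness. -/
def WeakGroupSP {n : ℕ} (f : (Fin n → S0) → A) : Prop :=
  ∀ S : Finset (Fin n), S.Nonempty → WeakCoalitionSP f S

/-- `a` is efficient at the profile `R`. -/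
def EfficientAt {n : ℕ} (R : Fin n → S0) (a : A) : Prop :=
  ¬ ∃ b : A, b ≠ a ∧ (∀ i : Fin n, (R i).1.rel b a) ∧ (∃ j : Fin n, (R j).1.P b a)

/-- Efficiency of a social choice function. -/
def Efficient {n : ℕ} (f : (Fin n → S0) → A) : Prop := ∀ R : Fin n → S0, EfficientAt R (f R)

/-- The tops-only property. -/
def TopsOnly {n : ℕ} (f : (Fin n → S0) → A) : Prop :=
  ∀ R R' : Fin n → S0,
    (∀ i : Fin n, (R i).1 = R0 ↔ (R' i).1 = R0) →
    (∀ i : Fin n, (R i).1 ≠ R0 → peak (R i).1 = peak (R' i).1) →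
    f R = f R'

/-- Target rules with a default. -/
def IsTargetRule {n : ℕ} (f : (Fin n → S0) → A) : Prop :=
  ∃ x y : A, f (indiffProfile n) = y ∧
    ∀ R : Fin n → S0, R ≠ indiffProfile n →
      ((tmin R ≤ (x : ℝ) ∧ (x : ℝ) ≤ tmax R) → f R = x) ∧
      ((x : ℝ) < tmin R → (f R : ℝ) = tmin R) ∧
      (tmax R < (x : ℝ) → (f R : ℝ) = tmax R)

/-- The single-peaked domain S. -/
def Ssp : Type := {R : Pref // SinglePeaked R}

/-!
Call a preference with peak `p` left-biased if it ranks everything at or below `p` above everything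
beyond `p`, and right-biased in the mirror case. If replacing agent `i`'s left-biased preference by
a right-biased one with the same peak `p` changes the outcome, strategy-proofness forces the two
outcomes `a` and `b` to satisfy `a < p < b`. Let a second agent `j` also switch to a left-biased
preference in the first profile, and to a right-biased one in the second: the outcomes stay at or
below `p` and at or above `p`, respectively. By induction on the number of agents whose peak is not
`p` these outcomes agree, so both are `p`. Hence `j` weakly prefers both `a` and `b` to `p`, which
no single-peaked preference allows. The biased preferences thus yield the same outcome, and then
every preference with peak `p` must yield it too.
-/

open Function

theorem update_induction {ι : Type*} {β : ι → Type*} [Finite ι] [DecidableEq ι]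
    {motive : (∀ i, β i) → Prop} {f g : ∀ i, β i} (base : motive f)
    (step : ∀ f' i, motive f' → motive (update f' i (g i))) : motive g := by
  have := Fintype.ofFinite ι
  suffices ∀ s : Finset ι, motive (s.piecewise g f) by simpa using this Finset.univ
  intro s
  induction s using Finset.induction_on with
  | empty => simpa using base
  | insert i s _ ih => simpa only [Finset.piecewise_insert] using step _ i ih

theorem forall_notMem_update {ι D : Type*} [DecidableEq ι] {P : D → Prop} {R : ι → D} {i : ι}
    {Q : D} {s : Finset ι} (hR : ∀ k ∉ insert i s, P (R k)) (hQ : P Q) :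
    ∀ k ∉ s, P (update R i Q k) := by
  intro k hks
  obtain rfl | hki := eq_or_ne k i
  · simpa using hQ
  · simpa [hki] using hR k (by simp [hki, hks])

section Preferences

variable {α : Type*} [LinearOrder α] {r l q : α → α → Prop} {p c a b : α}

/-- The relation `r` is single-peaked with peak `p`: moving away from `p` on either side is strictly
worse. This is `Pref.IsPeak` for a relation on an arbitrary linear order that need be neither total
nor transitive. -/
def IsPeak (r : α → α → Prop) (p : α) : Prop :=
  ∀ a b, (p ≤ a ∧ a < b) ∨ (b < a ∧ a ≤ p) → r a b ∧ ¬ r b a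

/-- A single-peaked relation that never ranks a point to the right of its peak `p` as high as `p` or
a point to the left of it. -/
structure IsLeftBiased (r : α → α → Prop) (p : α) : Prop where
  isPeak : IsPeak r p
  le_peak_of_rel ⦃a b : α⦄ : r a b → b ≤ p → a ≤ p

/-- A single-peaked relation that never ranks a point to the left of its peak `p` as high as `p` or
a point to the right of it. -/
structure IsRightBiased (r : α → α → Prop) (p : α) : Prop where
  isPeak : IsPeak r p
  peak_le_of_rel ⦃a b : α⦄ : r a b → p ≤ b → p ≤ a

theorem IsPeak.strict_of_ne (hr : IsPeak r p) (ha : a ≠ p) : r p a ∧ ¬ r a p :=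
  hr p a (ha.lt_or_gt.symm.imp (⟨le_rfl, ·⟩) (⟨·, le_rfl⟩))

theorem IsPeak.le_of_rel_of_le_peak (hr : IsPeak r p) (hab : r a b) (hb : b ≤ p) : b ≤ a :=
  not_lt.1 fun hlt => (hr b a (.inr ⟨hlt, hb⟩)).2 hab

theorem IsPeak.le_of_rel_of_peak_le (hr : IsPeak r p) (hab : r a b) (hb : p ≤ b) : a ≤ b :=
  not_lt.1 fun hlt => (hr b a (.inl ⟨hb, hlt⟩)).2 hab

theorem IsPeak.eq_of_rel (hr : IsPeak r p) (ha : r a p) : a = p :=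
  le_antisymm (hr.le_of_rel_of_peak_le ha le_rfl) (hr.le_of_rel_of_le_peak ha le_rfl)

theorem IsPeak.not_rel_and_rel_of_lt_of_lt (hr : IsPeak r c) (ha : a < p) (hb : p < b) :
    ¬ (r a p ∧ r b p) := by
  rintro ⟨hap, hbp⟩
  rcases le_total c p with hcp | hpc
  · exact hb.not_ge (hr.le_of_rel_of_peak_le hbp hcp)
  · exact ha.not_ge (hr.le_of_rel_of_le_peak hap hpc)

theorem IsLeftBiased.lt_peak_and_peak_lt (hl : IsLeftBiased l p) (hr : IsRightBiased r p)
    (hab : l a b) (hba : r b a) (hne : a ≠ b) : a < p ∧ p < b := by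
  constructor <;> by_contra! hle
  · exact hne <| le_antisymm
      (hl.isPeak.le_of_rel_of_peak_le hab (hr.peak_le_of_rel hba hle))
      (hr.isPeak.le_of_rel_of_peak_le hba hle)
  · exact hne <| le_antisymm
      (hr.isPeak.le_of_rel_of_le_peak hba (hl.le_peak_of_rel hab hle))
      (hl.isPeak.le_of_rel_of_le_peak hab hle)

theorem IsPeak.eq_of_rel_of_biased (hq : IsPeak q p) (hl : IsLeftBiased l p)
    (hr : IsRightBiased r p) (hqab : q a b) (hlba : l b a) (hrba : r b a) : a = b := by
  rcases le_total a p with hap | hpa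
  · exact le_antisymm (hr.isPeak.le_of_rel_of_le_peak hrba hap)
      (hq.le_of_rel_of_le_peak hqab (hl.le_peak_of_rel hlba hap))
  · exact le_antisymm (hq.le_of_rel_of_peak_le hqab (hr.peak_le_of_rel hrba hpa))
      (hl.isPeak.le_of_rel_of_peak_le hlba hpa)

end Preferences

section SocialChoice

variable {ι D α : Type*} {pref : D → α → α → Prop} {h : (ι → D) → α}

/-- No alternative is weakly better than `h R` for all agents and strictly better for some agent.
The preferences an agent may report are indexed by `D`. -/
def IsEfficient (pref : D → α → α → Prop) (h : (ι → D) → α) : Prop :=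
  ∀ R, ¬ ∃ b, b ≠ h R ∧ (∀ i, pref (R i) b (h R)) ∧ ∃ j, pref (R j) b (h R) ∧ ¬ pref (R j) (h R) b

theorem IsEfficient.surjective [Nonempty ι] [LinearOrder α] (hEff : IsEfficient pref h)
    (hpeak : ∀ p, ∃ Q, IsPeak (pref Q) p) : Surjective h := by
  intro p
  obtain ⟨Q, hQ⟩ := hpeak p
  refine ⟨fun _ => Q, by_contra fun hne => hEff (fun _ => Q) ?_⟩
  have hstrict := hQ.strict_of_ne hne
  exact ⟨p, Ne.symm hne, fun _ => hstrict.1, Classical.arbitrary ι, hstrict⟩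

variable [DecidableEq ι]

/-- No agent gains by misreporting a preference. The preferences an agent may report are indexed
by `D`. -/
def IsStrategyProof (pref : D → α → α → Prop) (h : (ι → D) → α) : Prop :=
  ∀ (R : ι → D) (i : ι) (Q : D), pref (R i) (h R) (h (update R i Q))

namespace IsStrategyProof

theorem rel_update_update (hSP : IsStrategyProof pref h) (R : ι → D) (i : ι) (Q Q' : D) :
    pref Q (h (update R i Q)) (h (update R i Q')) := by
  simpa using hSP (update R i Q) i Q'

theorem rel_update_self (hSP : IsStrategyProof pref h) (R : ι → D) (i : ι) (Q : D) :
    pref Q (h (update R i Q)) (h R) := by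
  simpa using hSP.rel_update_update R i Q (R i)

variable [LinearOrder α] {p c : α} {l r Q Q' : D} {R : ι → D} {i j : ι}

theorem eq_of_forall_isPeak [Finite ι] (hSP : IsStrategyProof pref h) (hsurj : Surjective h)
    (hR : ∀ i, IsPeak (pref (R i)) p) : h R = p := by
  obtain ⟨R₀, hR₀⟩ := hsurj p
  refine update_induction (motive := (h · = p)) hR₀ fun S i hS => (hR i).eq_of_rel ?_
  simpa only [hS] using hSP.rel_update_self S i (R i)

theorem update_eq_update_of_update_eq (hSP : IsStrategyProof pref h)
    (hl : IsLeftBiased (pref l) p) (hr : IsRightBiased (pref r) p) (hij : i ≠ j)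
    (hj : IsPeak (pref (R j)) c)
    (heq : h (update (update R i l) j l) = h (update (update R i r) j r)) :
    h (update R i l) = h (update R i r) := by
  by_contra hne
  obtain ⟨hlt, hgt⟩ := hl.lt_peak_and_peak_lt hr (hSP.rel_update_update R i l r)
    (hSP.rel_update_update R i r l) hne
  have hle : h (update (update R i l) j l) ≤ p :=
    hl.le_peak_of_rel (hSP.rel_update_self _ j l) hlt.le
  have hge : p ≤ h (update (update R i r) j r) :=
    hr.peak_le_of_rel (hSP.rel_update_self _ j r) hgt.le
  have hpl : h (update (update R i l) j l) = p := le_antisymm hle (heq ▸ hge)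
  have hjl := hSP (update R i l) j l
  have hjr := hSP (update R i r) j r
  rw [update_of_ne hij.symm, hpl] at hjl
  rw [update_of_ne hij.symm, ← heq, hpl] at hjr
  exact hj.not_rel_and_rel_of_lt_of_lt hlt hgt ⟨hjl, hjr⟩

theorem update_leftBiased_eq_update_rightBiased [Finite ι] (hSP : IsStrategyProof pref h)
    (hsurj : Surjective h) (hpeak : ∀ Q, ∃ c, IsPeak (pref Q) c)
    (hl : IsLeftBiased (pref l) p) (hr : IsRightBiased (pref r) p) (R : ι → D) (i : ι) :
    h (update R i l) = h (update R i r) := by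
  have := Fintype.ofFinite ι
  suffices ∀ (s : Finset ι) (R : ι → D) (i : ι), (∀ k ∉ insert i s, IsPeak (pref (R k)) p) →
      h (update R i l) = h (update R i r) from this Finset.univ R i (by simp)
  intro s
  induction s using Finset.induction_on with
  | empty =>
    intro R i hR
    have hunanimous {Q} (hQ : IsPeak (pref Q) p) : h (update R i Q) = p :=
      hSP.eq_of_forall_isPeak hsurj fun k =>
        forall_notMem_update (P := fun T => IsPeak (pref T) p) hR hQ k (Finset.notMem_empty k)
    rw [hunanimous hl.isPeak, hunanimous hr.isPeak]
  | insert j s _ ih =>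
    intro R i hR
    obtain rfl | hij := eq_or_ne i j
    · exact ih R i (by simpa using hR)
    have hR' : ∀ k ∉ insert j (insert i s), IsPeak (pref (R k)) p := by
      rwa [Finset.insert_comm]
    obtain ⟨c, hc⟩ := hpeak (R j)
    refine hSP.update_eq_update_of_update_eq hl hr hij hc ?_
    calc h (update (update R i l) j l)
        = h (update (update R i l) j r) :=
          ih _ j (forall_notMem_update (P := fun T => IsPeak (pref T) p) hR hl.isPeak)
      _ = h (update (update R j r) i l) := by rw [update_comm hij]
      _ = h (update (update R j r) i r) :=
          ih _ i (forall_notMem_update (P := fun T => IsPeak (pref T) p) hR' hr.isPeak)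
      _ = h (update (update R i r) j r) := by rw [update_comm hij]

theorem update_eq_update_of_isPeak [Finite ι] (hSP : IsStrategyProof pref h)
    (hsurj : Surjective h) (hpeak : ∀ Q, ∃ c, IsPeak (pref Q) c)
    (hleft : ∃ l, IsLeftBiased (pref l) p) (hright : ∃ r, IsRightBiased (pref r) p)
    (hQ : IsPeak (pref Q) p) (hQ' : IsPeak (pref Q') p) (R : ι → D) (i : ι) :
    h (update R i Q) = h (update R i Q') := by
  obtain ⟨l, hl⟩ := hleft
  obtain ⟨r, hr⟩ := hright
  have hlr := hSP.update_leftBiased_eq_update_rightBiased hsurj hpeak hl hr R i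
  have eq_left {T} (hT : IsPeak (pref T) p) : h (update R i T) = h (update R i l) :=
    hT.eq_of_rel_of_biased hl hr (hSP.rel_update_update R i T l)
      (hSP.rel_update_update R i l T) (hlr ▸ hSP.rel_update_update R i r T)
  rw [eq_left hQ, eq_left hQ']

end IsStrategyProof

end SocialChoice

theorem isPeak_peak (Q : Ssp) : IsPeak Q.1.rel (peak Q.1) := by
  rw [peak, dif_pos Q.2]
  exact Q.2.choose_spec

/-- The preference represented by the utility function `u`. -/
def Pref.ofUtility (u : A → ℝ) : Pref where
  rel a b := u b ≤ u a
  total a b := le_total (u b) (u a)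
  trans _ _ _ hab hbc := hbc.trans hab

theorem exists_isLeftBiased (p : A) : ∃ Q : Ssp, IsLeftBiased Q.1.rel p := by
  let Q := Pref.ofUtility fun a => if a ≤ p then (a : ℝ) else -a
  have hQ : IsLeftBiased Q.rel p := by
    constructor <;> simp only [IsPeak, Q, Pref.ofUtility, ← Subtype.coe_le_coe,
      ← Subtype.coe_lt_coe] <;> grind
  exact ⟨⟨Q, p, hQ.isPeak⟩, hQ⟩

theorem exists_isRightBiased (p : A) : ∃ Q : Ssp, IsRightBiased Q.1.rel p := by
  let Q := Pref.ofUtility fun a => if p ≤ a then 1 - (a : ℝ) else a - 1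
  have hQ : IsRightBiased Q.rel p := by
    constructor <;> simp only [IsPeak, Q, Pref.ofUtility, ← Subtype.coe_le_coe,
      ← Subtype.coe_lt_coe] <;> grind
  exact ⟨⟨Q, p, hQ.isPeak⟩, hQ⟩

theorem stmt_5_general {ι D α : Type*} [Finite ι] [DecidableEq ι] [LinearOrder α]
    {pref : D → α → α → Prop} {top : D → α} (htop : ∀ Q, IsPeak (pref Q) (top Q))
    (hleft : ∀ p, ∃ Q, IsLeftBiased (pref Q) p) (hright : ∀ p, ∃ Q, IsRightBiased (pref Q) p)
    {h : (ι → D) → α} (hsurj : Surjective h) (hSP : IsStrategyProof pref h)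
    {R R' : ι → D} (hR : ∀ i, top (R i) = top (R' i)) : h R = h R' := by
  refine (update_induction (f := R) (g := R')
    (motive := fun S => (∀ i, top (S i) = top (R' i)) ∧ h R = h S) ⟨hR, rfl⟩ ?_).2
  rintro S i ⟨hS, hRS⟩
  refine ⟨(forall_update_iff S fun k T => top T = top (R' k)).2 ⟨rfl, fun k _ => hS k⟩, ?_⟩
  have heq := hSP.update_eq_update_of_isPeak hsurj (fun Q => ⟨top Q, htop Q⟩) (hleft _) (hright _)
    (htop (S i)) (hS i ▸ htop (R' i)) S i
  rwa [update_eq_self, ← hRS] at heq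

/-- On the single-peaked domain, every efficient and
strategy-proof SCF is tops-only. -/
theorem stmt_5 (n : ℕ) (hn : 2 ≤ n) (h : (Fin n → Ssp) → A)
    (hEff : ∀ R : Fin n → Ssp,
      ¬ ∃ b : A, b ≠ h R ∧ (∀ i : Fin n, (R i).1.rel b (h R)) ∧
        (∃ j : Fin n, (R j).1.P b (h R)))
    (hSP : ∀ (R : Fin n → Ssp) (i : Fin n) (Ri' : Ssp),
      (R i).1.rel (h R) (h (Function.update R i Ri')))
    (R R' : Fin n → Ssp)
    (hpeaks : ∀ i : Fin n, peak (R i).1 = peak (R' i).1) :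
    h R = h R' := by
  have : Nonempty (Fin n) := ⟨⟨0, by lia⟩⟩
  have hsurj : Surjective h := IsEfficient.surjective (pref := fun Q : Ssp => Q.1.rel) hEff
    fun p => (exists_isLeftBiased p).imp fun _ hQ => hQ.isPeak
  exact stmt_5_general isPeak_peak exists_isLeftBiased exists_isRightBiased hsurj hSP hpeaks
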